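/- Fix integers m ≥ 1 and 0 ≤ ℓ ≤ m−1 and apply the construction in the context with f = χ_m^{(ℓ)}, M = 8m+4, ν = 1, a = (2m−2ℓ−1)², and b = 8(2m+1), obtaining the sequence ξ_{ℓ,m}(n). Then ξ_{ℓ,m}(n) / [ sin(π(ℓ+1)/(2m+1)) · ((2m+1)/π²)^(n+1) · 2^(n+3) · n! · √n · e^(π²/(8m+4)) / √π ] → 1 as n → ∞. -/

import Mathlib

/-- The Fourier coefficient `G_f^{(ν)}(k)` of a function `f : ℤ → ℝ` of period `M`. -/
noncomputable def Gf (M : ℕ) (f : ℤ → ℝ) (ν : ℕ) (k : ℕ) : ℝ :=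
  if ν = 0 then
    (2 / Real.sqrt M) * ∑ m ∈ Finset.range M, f m * Real.sin (2 * Real.pi * m * k / M)
  else
    (2 / Real.sqrt M) * ∑ m ∈ Finset.range M, f m * Real.cos (2 * Real.pi * m * k / M)

/-- `C_n = (−1)^(n+1) (M^(2n+ν)/(2n+ν+1)) ∑_{m=1}^M f(m) B_{2n+ν+1}(m/M)`. -/
noncomputable def Cf (M : ℕ) (f : ℤ → ℝ) (ν : ℕ) (n : ℕ) : ℝ :=
  (-1) ^ (n + 1) * ((M : ℝ) ^ (2 * n + ν) / (2 * n + ν + 1)) *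
    ∑ m ∈ Finset.Icc 1 M,
      f m * (((Polynomial.bernoulli (2 * n + ν + 1)).eval ((m : ℚ) / (M : ℚ)) : ℚ) : ℝ)

/-- `D_n = b^(−n) ∑_{k=0}^n C(n,k) a^(n−k) C_k`. -/
noncomputable def Df (M : ℕ) (f : ℤ → ℝ) (ν a b : ℕ) (n : ℕ) : ℝ :=
  ((b : ℝ) ^ n)⁻¹ *
    ∑ k ∈ Finset.range (n + 1), (n.choose k : ℝ) * (a : ℝ) ^ (n - k) * Cf M f ν k

/-- The unsigned Stirling number of the first kind `s(n,j)`: the coefficient of `X^j`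
in `X (X+1) (X+2) ⋯ (X+n−1)`. -/
noncomputable def stirling1 (n j : ℕ) : ℝ :=
  (∏ i ∈ Finset.range n, (Polynomial.X + Polynomial.C (i : ℝ))).coeff j

/-- `ξ(0) = D_0` and `ξ(n) = (1/n!) ∑_{m=0}^{n−1} s(n, n−m) D_{n−m}` for `n ≥ 1`. -/
noncomputable def xif (M : ℕ) (f : ℤ → ℝ) (ν a b : ℕ) : ℕ → ℝ
  | 0 => Df M f ν a b 0
  | n + 1 => (1 / ((n + 1).factorial : ℝ)) *
      ∑ m ∈ Finset.range (n + 1), stirling1 (n + 1) (n + 1 - m) * Df M f ν a b (n + 1 - m)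

/-- The periodic function `χ_m^{(ℓ)}` of period `8m+4` from Hikami's strange identity for
the Kontsevich–Zagier series of the torus knot `T(2, 2m+1)`. -/
noncomputable def chiX (m ℓ : ℕ) (n : ℤ) : ℝ :=
  if n % (8 * m + 4) = (2 * m - 2 * ℓ - 1) % (8 * m + 4) ∨
      n % (8 * m + 4) = (6 * m + 2 * ℓ + 5) % (8 * m + 4) then -(1 / 2)
  else if n % (8 * m + 4) = (2 * m + 2 * ℓ + 3) % (8 * m + 4) ∨
      n % (8 * m + 4) = (6 * m - 2 * ℓ + 1) % (8 * m + 4) then 1 / 2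
  else 0

open Filter Topology

lemma tannery (w : ℕ → ℕ → ℝ) (W B c : ℕ → ℝ) (L : ℝ)
    (hw : ∀ j, Tendsto (fun n => w n j) atTop (𝓝 (W j)))
    (hB : ∀ n j, j ≤ n → |w n j| ≤ B j) (hB0 : ∀ j, 0 ≤ B j) (hS : Summable B)
    (hc : Tendsto c atTop (𝓝 L)) :
    Tendsto (fun n => ∑ j ∈ Finset.range (n + 1), w n j * c (n - j)) atTop
      (𝓝 ((∑' j, W j) * L)) := by
  obtain ⟨A, hA⟩ : ∃ A, ∀ n, |c n| ≤ A := by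
    obtain ⟨A, hA⟩ := (Metric.isBounded_range_of_tendsto c hc).exists_norm_le
    exact ⟨A, fun n => hA _ ⟨n, rfl⟩⟩
  have hA0 : 0 ≤ A := (abs_nonneg _).trans (hA 0)
  have key := tendsto_tsum_of_dominated_convergence (𝓕 := atTop)
    (f := fun n j => if j ≤ n then w n j * c (n - j) else 0) (g := fun j => W j * L)
    (bound := fun j => B j * A) (hS.mul_right A) ?_ ?_
  · rw [← tsum_mul_right]
    refine key.congr fun n => ?_
    rw [tsum_eq_sum (s := Finset.range (n + 1))]
    · refine Finset.sum_congr rfl fun j hj => ?_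
      rw [if_pos (by simpa [Nat.lt_succ_iff] using hj)]
    · intro j hj
      rw [if_neg (by simpa [Nat.lt_succ_iff] using hj)]
  · intro j
    have h1 : Tendsto (fun n => w n j * c (n - j)) atTop (𝓝 (W j * L)) :=
      (hw j).mul (hc.comp (tendsto_sub_atTop_nat j))
    refine h1.congr' ?_
    filter_upwards [eventually_ge_atTop j] with n hn
    rw [if_pos hn]
  · refine Eventually.of_forall fun n j => ?_
    split_ifs with h
    · rw [Real.norm_eq_abs, abs_mul]
      exact mul_le_mul (hB n j h) (hA _) (abs_nonneg _) (hB0 j)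
    · simpa using mul_nonneg (hB0 j) hA0

/-- Recursive elementary symmetric numbers. -/
def EE : ℕ → ℕ → ℕ
  | _, 0 => 1
  | 0, _ + 1 => 0
  | n + 1, j + 1 => EE n (j + 1) + n * EE n j

lemma EE_zero_right (n : ℕ) : EE n 0 = 1 := by cases n <;> rfl

lemma EE_eq_zero : ∀ n j, n < j → EE n j = 0
  | _, 0, h => by omega
  | 0, j + 1, _ => rfl
  | n + 1, j + 1, h => by
    rw [EE, EE_eq_zero n (j + 1) (by omega), EE_eq_zero n j (by omega)]
    simp

def PP (n j : ℕ) : ℕ := (2 * n + 1).descFactorial (2 * j)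

lemma PP_succ_succ (n j : ℕ) : PP (n + 1) (j + 1) = (2 * n + 3) * (2 * n + 2) * PP n j := by
  unfold PP
  rw [show 2 * (n + 1) + 1 = (2 * n + 1) + 1 + 1 by ring, show 2 * (j + 1) = 2 * j + 1 + 1 by ring,
    Nat.succ_descFactorial_succ, Nat.succ_descFactorial_succ]
  ring

lemma PP_succ (n j : ℕ) : PP n (j + 1) = (2 * n - 2 * j) * (2 * n + 1 - 2 * j) * PP n j := by
  unfold PP
  rw [show 2 * (j + 1) = 2 * j + 1 + 1 by ring,
    Nat.descFactorial_succ, Nat.descFactorial_succ]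
  rw [show 2 * n + 1 - (2 * j + 1) = 2 * n - 2 * j by omega]
  ring

lemma PP_pos (n j : ℕ) (h : j ≤ n) : 0 < PP n j := by
  unfold PP
  exact Nat.pos_of_ne_zero (by rw [Ne, Nat.descFactorial_eq_zero_iff_lt]; omega)

lemma PP_fact (n j : ℕ) (h : j ≤ n) :
    (2 * (n - j) + 1).factorial * PP n j = (2 * n + 1).factorial := by
  unfold PP
  rw [← Nat.factorial_mul_descFactorial (n := 2 * n + 1) (k := 2 * j) (by omega)]
  congr 2
  omega

lemma EE_le_PP : ∀ n j, j.factorial * EE n j ≤ PP n j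
  | n, 0 => by simp [PP, EE_zero_right]
  | 0, j + 1 => by simp [EE]
  | n + 1, j + 1 => by
    rw [PP_succ_succ, EE]
    have h1 := EE_le_PP n (j + 1)
    have h2 := EE_le_PP n j
    rw [PP_succ] at h1
    by_cases hj : j ≤ n
    · obtain ⟨u, rfl⟩ := Nat.exists_eq_add_of_le hj
      rw [show 2 * (j + u) - 2 * j = 2 * u by omega,
        show 2 * (j + u) + 1 - 2 * j = 2 * u + 1 by omega] at h1
      calc (j + 1).factorial * (EE (j + u) (j + 1) + (j + u) * EE (j + u) j)
          = (j + 1).factorial * EE (j + u) (j + 1) +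
            (j + u) * (j + 1) * (j.factorial * EE (j + u) j) := by
              rw [Nat.factorial_succ]; ring
        _ ≤ 2 * u * (2 * u + 1) * PP (j + u) j + (j + u) * (j + 1) * PP (j + u) j :=
            add_le_add h1 (Nat.mul_le_mul_left _ h2)
        _ = (2 * u * (2 * u + 1) + (j + u) * (j + 1)) * PP (j + u) j := by ring
        _ ≤ _ := Nat.mul_le_mul_right _ (by nlinarith)
    · rw [EE_eq_zero n (j + 1) (by omega), EE_eq_zero n j (by omega)]
      simp

lemma desc_le_PP : ∀ n j, j ≤ n → n.descFactorial j ≤ PP n j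
  | n, 0, _ => by simp [PP]
  | 0, j + 1, h => by omega
  | n + 1, j + 1, h => by
    rw [PP_succ_succ, Nat.succ_descFactorial_succ]
    exact Nat.mul_le_mul (by nlinarith) (desc_le_PP n j (by omega))

lemma EE_upper : ∀ n j, (2 ^ j * j.factorial * EE n j : ℝ) ≤ (n : ℝ) ^ (2 * j)
  | n, 0 => by simp [EE_zero_right]
  | 0, j + 1 => by simp [EE]
  | n + 1, j + 1 => by
    have h1 := EE_upper n (j + 1)
    have h2 := EE_upper n j
    have h3 : (n : ℝ) ^ (2 * (j + 1)) + (2 * (j + 1) : ℝ) * n ^ (2 * j + 1) ≤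
        ((n : ℝ) + 1) ^ (2 * (j + 1)) := by
      have hn : (0 : ℝ) ≤ n := n.cast_nonneg
      have h : ∀ k : ℕ, (n : ℝ) ^ (k + 1) + (k + 1) * n ^ k ≤ ((n : ℝ) + 1) ^ (k + 1) := by
        intro k
        induction k with
        | zero => simp
        | succ k ih =>
          have : (0 : ℝ) ≤ (k + 1) * n ^ k := by positivity
          have := mul_le_mul_of_nonneg_right ih (by positivity : (0 : ℝ) ≤ (n : ℝ) + 1)
          rw [pow_succ (_ + _) (k + 1)]
          refine le_trans ?_ this
          push_cast
          ring_nf at *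
          nlinarith
      have := h (2 * j + 1)
      rw [show 2 * (j + 1) = 2 * j + 1 + 1 by ring]
      push_cast at this ⊢
      linarith
    rw [EE, Nat.factorial_succ]
    rw [Nat.factorial_succ] at h1
    push_cast at h1 ⊢
    have h4 := mul_le_mul_of_nonneg_left h2 (by positivity : (0 : ℝ) ≤ 2 * (j + 1) * n)
    refine le_trans ?_ h3
    calc _ = (2 ^ (j + 1) * ((j + 1) * j.factorial) * EE n (j + 1) : ℝ) +
        2 * (j + 1) * n * (2 ^ j * j.factorial * EE n j) := by ring
      _ ≤ _ := by
        refine (add_le_add h1 h4).trans (le_of_eq (by ring))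

lemma EE_lower : ∀ u j : ℕ, ((u : ℝ)) ^ (2 * j) ≤ (2 ^ j * j.factorial * EE (u + j) j : ℝ)
  | u, 0 => by simp [EE_zero_right]
  | 0, j + 1 => by
    simp only [CharP.cast_eq_zero]
    rw [zero_pow (by omega)]
    positivity
  | u + 1, j + 1 => by
    have h1 := EE_lower u (j + 1)
    have h2 := EE_lower (u + 1) j
    have h3 : ((u : ℝ) + 1) ^ (2 * (j + 1)) ≤
        (u : ℝ) ^ (2 * (j + 1)) + (2 * (j + 1) : ℝ) * (u + 1) ^ (2 * j + 1) := by
      have hn : (0 : ℝ) ≤ u := u.cast_nonneg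
      have h : ∀ k : ℕ, ((u : ℝ) + 1) ^ (k + 1) ≤ (u : ℝ) ^ (k + 1) + (k + 1) * (u + 1) ^ k := by
        intro k
        induction k with
        | zero => simp
        | succ k ih =>
          have h0 : (u : ℝ) ^ (k + 1) ≤ (u + 1) ^ (k + 1) := by gcongr; linarith
          have := mul_le_mul_of_nonneg_right ih (by positivity : (0 : ℝ) ≤ (u : ℝ) + 1)
          rw [pow_succ (_ + _) (k + 1)]
          refine le_trans this ?_
          have e : ((u : ℝ) ^ (k + 1) + (k + 1) * (u + 1) ^ k) * (u + 1) =
            u ^ (k + 1 + 1) + u ^ (k + 1) + (k + 1) * (u + 1) ^ (k + 1) := by ring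
          rw [e]
          push_cast
          linarith
      have := h (2 * j + 1)
      rw [show 2 * (j + 1) = 2 * j + 1 + 1 by ring]
      push_cast at this ⊢
      linarith
    rw [show u + 1 + (j + 1) = (u + 1 + j) + 1 by ring, EE, Nat.factorial_succ]
    rw [Nat.factorial_succ, show u + (j + 1) = u + 1 + j by ring] at h1
    push_cast at h1 h2 ⊢
    have h4 := mul_le_mul_of_nonneg_left h2 (by positivity : (0 : ℝ) ≤ 2 * (j + 1) * (u + 1 + j))
    refine le_trans h3 ?_
    calc _ ≤ (u : ℝ) ^ (2 * (j + 1)) + 2 * (j + 1) * (u + 1 + j) * (u + 1) ^ (2 * j) := by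
          rw [pow_succ _ (2 * j), mul_comm (_ ^ _) ((u : ℝ) + 1), ← mul_assoc]
          have : (u : ℝ) + 1 ≤ u + 1 + j := le_add_of_nonneg_right j.cast_nonneg
          gcongr
      _ ≤ _ := add_le_add h1 h4
      _ = _ := by ring

lemma EE_lim (j : ℕ) : Tendsto (fun n : ℕ => (EE n j : ℝ) / (n : ℝ) ^ (2 * j)) atTop
    (𝓝 (1 / (2 ^ j * j.factorial))) := by
  have hp : (0 : ℝ) < 2 ^ j * j.factorial := by positivity
  have hl : Tendsto (fun n : ℕ => (((n - j : ℕ) : ℝ) / n) ^ (2 * j) / (2 ^ j * j.factorial)) atTop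
      (𝓝 (1 / (2 ^ j * j.factorial))) := by
    have h1 : Tendsto (fun n : ℕ => ((n - j : ℕ) : ℝ) / n) atTop (𝓝 1) := by
      have : Tendsto (fun n : ℕ => 1 - (j : ℝ) / n) atTop (𝓝 (1 - 0)) :=
        tendsto_const_nhds.sub (tendsto_const_div_atTop_nhds_zero_nat _)
      rw [sub_zero] at this
      refine this.congr' ?_
      filter_upwards [eventually_ge_atTop j, eventually_gt_atTop 0] with n hn hn0
      rw [Nat.cast_sub hn]
      field_simp
    simpa using (h1.pow (2 * j)).div_const (2 ^ j * j.factorial : ℝ)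
  refine tendsto_of_tendsto_of_tendsto_of_le_of_le' hl tendsto_const_nhds ?_ ?_
  · filter_upwards [eventually_ge_atTop j, eventually_gt_atTop 0] with n hn hn0
    have := EE_lower (n - j) j
    rw [Nat.sub_add_cancel hn] at this
    rw [div_pow, div_div, div_le_div_iff₀ (by positivity) (by positivity)]
    have h2 := mul_le_mul_of_nonneg_right this (by positivity : (0 : ℝ) ≤ (n : ℝ) ^ (2 * j))
    linarith
  · filter_upwards [eventually_gt_atTop 0] with n hn0
    have := EE_upper n j
    rw [div_le_div_iff₀ (by positivity) (by positivity)]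
    linarith

lemma PP_lim (j : ℕ) : Tendsto (fun n : ℕ => (PP n j : ℝ) / (n : ℝ) ^ (2 * j)) atTop
    (𝓝 (4 ^ j)) := by
  induction j with
  | zero => simp [PP]
  | succ j ih =>
    have h1 : Tendsto (fun n : ℕ => (2 - (2 * j : ℝ) / n) * (2 - ((2 * j - 1 : ℝ)) / n)) atTop
        (𝓝 ((2 - 0) * (2 - 0))) :=
      (tendsto_const_nhds.sub (tendsto_const_div_atTop_nhds_zero_nat _)).mul
      (tendsto_const_nhds.sub (tendsto_const_div_atTop_nhds_zero_nat _))
    have h2 := h1.mul ih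
    rw [show ((2 : ℝ) - 0) * (2 - 0) * 4 ^ j = 4 ^ (j + 1) by ring] at h2
    refine h2.congr' ?_
    filter_upwards [eventually_ge_atTop j, eventually_gt_atTop 0] with n hn hn0
    rw [PP_succ]
    push_cast [Nat.cast_sub (show 2 * j ≤ 2 * n by omega),
      Nat.cast_sub (show 2 * j ≤ 2 * n + 1 by omega)]
    have : (n : ℝ) ≠ 0 := by positivity
    field_simp
    ring

lemma EP_lim (j : ℕ) : Tendsto (fun n : ℕ => (EE n j : ℝ) / PP n j) atTop
    (𝓝 (1 / (8 ^ j * j.factorial))) := by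
  have := (EE_lim j).div (PP_lim j) (by positivity)
  rw [show (1 / (2 ^ j * j.factorial) / 4 ^ j : ℝ) = 1 / (8 ^ j * j.factorial) by
    rw [show (8 : ℝ) = 2 * 4 by norm_num, mul_pow]; field_simp] at this
  refine this.congr' ?_
  filter_upwards [eventually_gt_atTop 0] with n hn0
  have : (n : ℝ) ≠ 0 := by positivity
  simp only [Pi.div_apply]
  rw [div_div_div_cancel_right₀ (by positivity)]

lemma CP_lim (j : ℕ) : Tendsto (fun n : ℕ => (n.choose j : ℝ) / PP n j) atTop
    (𝓝 (if j = 0 then 1 else 0)) := by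
  split_ifs with h
  · subst h
    simp [PP]
  · have h1 : Tendsto (fun n : ℕ => ((1 : ℝ) / n) ^ j / ((PP n j : ℝ) / (n : ℝ) ^ (2 * j))) atTop
      (𝓝 (0 ^ j / 4 ^ j)) :=
      ((tendsto_const_div_atTop_nhds_zero_nat 1).pow j).div (PP_lim j) (by positivity)
    rw [zero_pow h, zero_div] at h1
    refine tendsto_of_tendsto_of_tendsto_of_le_of_le' tendsto_const_nhds h1
      (Eventually.of_forall fun n => by positivity) ?_
    filter_upwards [eventually_ge_atTop j, eventually_gt_atTop 0] with n hn hn0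
    have : (0 : ℝ) < n := by positivity
    have hP : (0 : ℝ) < PP n j := by exact_mod_cast PP_pos n j hn
    have hc : (n.choose j : ℝ) ≤ (n : ℝ) ^ j := by exact_mod_cast Nat.choose_le_pow n j
    have e : ((1 : ℝ) / n) ^ j / ((PP n j : ℝ) / (n : ℝ) ^ (2 * j)) = n ^ j / PP n j := by
      rw [two_mul, pow_add, div_pow, one_pow]
      field_simp
    rw [e]
    gcongr

lemma fact_lim : Tendsto (fun n : ℕ => ((2 * n + 1).factorial : ℝ) /
    ((n.factorial : ℝ) ^ 2 * √n * 4 ^ n)) atTop (𝓝 (2 / √Real.pi)) := by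
  have h := Stirling.tendsto_stirlingSeq_sqrt_pi
  have hpi : (0 : ℝ) < √Real.pi := Real.sqrt_pos.mpr Real.pi_pos
  have h2 := (h.comp (tendsto_id.const_mul_atTop' (show 0 < 2 by norm_num))).div (h.pow 2)
    (by positivity)
  have h3 : Tendsto (fun n : ℕ => (2 : ℝ) + 1 / n) atTop (𝓝 (2 + 0)) :=
    tendsto_const_nhds.add (tendsto_const_div_atTop_nhds_zero_nat 1)
  have h4 := h3.mul h2
  rw [show (2 + 0) * (√Real.pi / √Real.pi ^ 2) = 2 / √Real.pi by field_simp; ring] at h4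
  refine h4.congr' ?_
  filter_upwards [eventually_gt_atTop 0] with n hn0
  have hn : (0 : ℝ) < n := by positivity
  simp only [Pi.div_apply, Function.comp, id, Stirling.stirlingSeq]
  rw [Nat.factorial_succ]
  push_cast
  rw [show (2 * (2 * n) : ℝ) = 4 * n by ring, Real.sqrt_mul (by norm_num) (n : ℝ),
    show (4 : ℝ) = 2 ^ 2 by norm_num, Real.sqrt_sq (by norm_num), Real.sqrt_mul (by norm_num)]
  have e2 : √(2 : ℝ) ^ 2 = 2 := Real.sq_sqrt (by norm_num)
  have e3 : √(n : ℝ) ^ 2 = n := Real.sq_sqrt hn.le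
  have hs : 0 < √(n : ℝ) := Real.sqrt_pos.mpr hn
  have hs2 : 0 < √(2 : ℝ) := Real.sqrt_pos.mpr (by norm_num)
  have hE := Real.exp_pos 1
  simp only [mul_pow, div_pow, ← pow_mul]
  rw [e2, e3]
  field_simp
  ring

lemma stirling1_gt : ∀ n k, n < k → stirling1 n k = 0 := by
  intro n k h
  unfold stirling1
  apply Polynomial.coeff_eq_zero_of_natDegree_lt
  refine lt_of_le_of_lt (Polynomial.natDegree_prod_le _ _) ?_
  simp only [Polynomial.natDegree_X_add_C]
  simpa using h

lemma stirling1_succ_zero (n : ℕ) : stirling1 (n + 1) 0 = n * stirling1 n 0 := by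
  unfold stirling1
  rw [Finset.prod_range_succ, mul_add, Polynomial.coeff_add, Polynomial.coeff_mul_C]
  simp [mul_comm]

lemma stirling1_succ_succ (n k : ℕ) :
    stirling1 (n + 1) (k + 1) = stirling1 n k + n * stirling1 n (k + 1) := by
  unfold stirling1
  rw [Finset.prod_range_succ, mul_add, Polynomial.coeff_add, Polynomial.coeff_mul_C,
    Polynomial.coeff_mul_X]
  ring

lemma stirling1_eq (n : ℕ) : ∀ j k, k + j = n → stirling1 n k = EE n j := by
  induction n with
  | zero =>
    intro j k h
    obtain ⟨rfl, rfl⟩ : k = 0 ∧ j = 0 := by omega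
    simp [stirling1, EE]
  | succ n ih =>
    intro j k h
    cases k with
    | zero =>
      obtain rfl : j = n + 1 := by omega
      rw [stirling1_succ_zero, ih n 0 (by omega), EE, EE_eq_zero n (n + 1) (by omega)]
      push_cast
      ring
    | succ k =>
      rw [stirling1_succ_succ]
      cases j with
      | zero =>
        rw [ih 0 k (by omega), stirling1_gt n (k + 1) (by omega), EE_zero_right, EE_zero_right]
        simp
      | succ j =>
        rw [ih (j + 1) k (by omega), ih j (k + 1) (by omega), EE]
        push_cast
        ring

lemma xif_eq (M : ℕ) (f : ℤ → ℝ) (ν a b n : ℕ) :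
    n.factorial * xif M f ν a b n =
      ∑ j ∈ Finset.range (n + 1), EE n j * Df M f ν a b (n - j) := by
  cases n with
  | zero => simp [xif, EE]
  | succ n =>
    rw [xif, ← mul_assoc, mul_one_div_cancel (by positivity), one_mul,
      Finset.sum_range_succ _ (n + 1)]
    have h0 : EE (n + 1) (n + 1) = 0 := by
      have : ∀ n, EE (n + 1) (n + 1) = 0 := by
        intro n
        induction n with
        | zero => simp [EE]
        | succ n ih => rw [EE, ih, EE_eq_zero _ _ (by omega)]; simp
      exact this n
    rw [h0, Nat.cast_zero, zero_mul, add_zero]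
    refine Finset.sum_congr rfl fun j hj => ?_
    rw [stirling1_eq (n + 1) j (n + 1 - j) (by have := Finset.mem_range.mp hj; omega)]

lemma bern_lim (x : ℝ) (hx : x ∈ Set.Icc (0 : ℝ) 1) :
    Tendsto (fun n : ℕ => (-1 : ℝ) ^ n * (2 * Real.pi) ^ (2 * n + 2) / 2 / (2 * n + 2).factorial *
      (Polynomial.map (algebraMap ℚ ℝ) (Polynomial.bernoulli (2 * n + 2))).eval x) atTop
      (𝓝 (Real.cos (2 * Real.pi * x))) := by
  have key := tendsto_tsum_of_dominated_convergence (𝓕 := atTop)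
    (f := fun (n j : ℕ) => 1 / (j : ℝ) ^ (2 * (n + 1)) * Real.cos (2 * Real.pi * j * x))
    (g := fun j : ℕ => if j = 1 then Real.cos (2 * Real.pi * x) else 0)
    (bound := fun j : ℕ => 1 / (j : ℝ) ^ 2)
    (Real.summable_one_div_nat_pow.mpr (by norm_num)) ?_ ?_
  · rw [tsum_ite_eq] at key
    refine key.congr fun n => ?_
    rw [(hasSum_one_div_nat_pow_mul_cos (k := n + 1) (by omega) hx).tsum_eq]
    rw [pow_add (-1 : ℝ) (n + 1) 1, pow_add (-1 : ℝ) n 1, show 2 * (n + 1) = 2 * n + 2 by ring]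
    ring
  · intro j
    rcases lt_trichotomy j 1 with h | h | h
    · obtain rfl : j = 0 := by omega
      simp
    · subst h
      simp
    · rw [if_neg (by omega)]
      have hj : (1 : ℝ) < j := by exact_mod_cast h
      have h1 : Tendsto (fun n : ℕ => (1 / (j : ℝ) ^ 2) ^ (n + 1)) atTop (𝓝 0) := by
        refine (tendsto_pow_atTop_nhds_zero_of_lt_one (by positivity) ?_).comp
          (tendsto_add_atTop_nat 1)
        rw [div_lt_one (by positivity)]
        nlinarith
      have h2 := h1.mul_const (Real.cos (2 * Real.pi * j * x))
      rw [zero_mul] at h2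
      refine h2.congr fun n => ?_
      rw [div_pow, one_pow, pow_mul]
  · refine Eventually.of_forall fun n j => ?_
    rw [norm_mul, Real.norm_eq_abs, Real.norm_eq_abs, abs_of_nonneg (by positivity)]
    rcases Nat.eq_zero_or_pos j with rfl | hj
    · simp
    · have hj1 : (1 : ℝ) ≤ j := by exact_mod_cast hj
      calc _ ≤ 1 / (j : ℝ) ^ (2 * (n + 1)) * 1 := by
            gcongr
            exact Real.abs_cos_le_one _
        _ ≤ _ := by
          rw [mul_one]
          gcongr
          omega

lemma Cf_lim (M : ℕ) (hM : 0 < M) (f : ℤ → ℝ) :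
    Tendsto (fun n : ℕ => Cf M f 1 n / ((2 * n + 1).factorial * ((M / (2 * Real.pi)) ^ 2) ^ n))
      atTop (𝓝 (-(2 * M / (2 * Real.pi) ^ 2) *
        ∑ m ∈ Finset.Icc 1 M, f m * Real.cos (2 * Real.pi * (m / M)))) := by
  have hM' : (0 : ℝ) < M := by exact_mod_cast hM
  have hpi := Real.pi_pos
  have h1 : Tendsto (fun n : ℕ => ∑ m ∈ Finset.Icc 1 M, f m * ((-1 : ℝ) ^ n *
      (2 * Real.pi) ^ (2 * n + 2) / 2 / (2 * n + 2).factorial *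
      (Polynomial.map (algebraMap ℚ ℝ) (Polynomial.bernoulli (2 * n + 2))).eval ((m : ℝ) / M)))
      atTop (𝓝 (∑ m ∈ Finset.Icc 1 M, f m * Real.cos (2 * Real.pi * (m / M)))) := by
    refine tendsto_finsetSum _ fun m hm => (bern_lim _ ?_).const_mul _
    have := Finset.mem_Icc.mp hm
    have h2 : (m : ℝ) ≤ M := by exact_mod_cast this.2
    exact ⟨by positivity, by rw [div_le_one hM']; exact h2⟩
  refine (h1.const_mul (-(2 * M / (2 * Real.pi) ^ 2))).congr fun n => ?_
  unfold Cf
  have hs : ∀ m : ℕ, (((Polynomial.bernoulli (2 * n + 1 + 1)).eval ((m : ℚ) / (M : ℚ)) : ℚ) : ℝ) =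
      (Polynomial.map (algebraMap ℚ ℝ) (Polynomial.bernoulli (2 * n + 2))).eval ((m : ℝ) / M) := by
    intro m
    have := Polynomial.eval_map_apply (f := algebraMap ℚ ℝ)
      (p := Polynomial.bernoulli (2 * n + 2)) ((m : ℚ) / M)
    simp only [eq_ratCast] at this
    rw [← this]
    push_cast
    rfl
  simp only [hs]
  simp only [mul_left_comm (f _)]
  rw [← Finset.mul_sum, show 2 * n + 2 = (2 * n + 1) + 1 by ring, Nat.factorial_succ (2 * n + 1)]
  push_cast
  set T0 := ∑ m ∈ Finset.Icc 1 M, f m *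
    (Polynomial.map (algebraMap ℚ ℝ) (Polynomial.bernoulli (2 * n + 1 + 1))).eval ((m : ℝ) / M)
  rw [← pow_mul, div_pow]
  field_simp
  ring

lemma main_lim (M : ℕ) (hM : 0 < M) (f : ℤ → ℝ) (a b : ℕ) (hb : 0 < b) (L : ℝ)
    (hL : Tendsto (fun n : ℕ => Cf M f 1 n /
      ((2 * n + 1).factorial * ((M / (2 * Real.pi)) ^ 2) ^ n)) atTop (𝓝 L)) :
    Tendsto (fun n : ℕ => n.factorial * xif M f 1 a b n * b ^ n /
      ((2 * n + 1).factorial * ((M / (2 * Real.pi)) ^ 2) ^ n)) atTop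
      (𝓝 (Real.exp (b / ((M / (2 * Real.pi)) ^ 2) / 8) * L)) := by
  have hM' : (0 : ℝ) < M := by exact_mod_cast hM
  have hb' : (0 : ℝ) < b := by exact_mod_cast hb
  have hpi := Real.pi_pos
  have hR : (0 : ℝ) < (M / (2 * Real.pi)) ^ 2 := by positivity
  generalize ((M : ℝ) / (2 * Real.pi)) ^ 2 = R at *
  have hK : ∀ n j, j ≤ n → ((2 * n + 1).factorial * R ^ n : ℝ) =
      ((2 * (n - j) + 1).factorial * R ^ (n - j)) * (R ^ j * PP n j) := by
    intro n j h
    have hp : R ^ n = R ^ (n - j) * R ^ j := by rw [← pow_add]; congr 1; omega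
    rw [← PP_fact n j h, hp]
    push_cast
    ring
  have hD : Tendsto (fun n : ℕ => Df M f 1 a b n * b ^ n / ((2 * n + 1).factorial * R ^ n)) atTop
      (𝓝 L) := by
    have := tannery (fun n j => (n.choose j : ℝ) / PP n j * (a / R) ^ j)
      (fun j => (if j = 0 then 1 else 0) * (a / R) ^ j) (fun j => (a / R) ^ j / j.factorial) _ L
      (fun j => (CP_lim j).mul_const _) ?_ (fun j => by positivity)
      (Real.summable_pow_div_factorial _) hL
    · have e : (∑' j : ℕ, (if j = 0 then (1 : ℝ) else 0) * (a / R) ^ j) = 1 := by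
        rw [tsum_eq_single 0 (fun j hj => by simp [hj])]
        simp
      rw [e, one_mul] at this
      refine this.congr fun n => ?_
      unfold Df
      rw [← Finset.sum_flip (fun k => (n.choose k : ℝ) * (a : ℝ) ^ (n - k) * Cf M f 1 k),
        Finset.mul_sum, Finset.sum_mul, Finset.sum_div]
      refine Finset.sum_congr rfl fun j hj => ?_
      have hj : j ≤ n := by simpa [Nat.lt_succ_iff] using hj
      have hP : (0 : ℝ) < PP n j := by exact_mod_cast PP_pos n j hj
      rw [hK n j hj, Nat.choose_symm hj, Nat.sub_sub_self hj, div_pow]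
      field_simp
    · intro n j hj
      have hP : (0 : ℝ) < PP n j := by exact_mod_cast PP_pos n j hj
      rw [abs_of_nonneg (by positivity)]
      have h1 : (j.factorial * n.choose j : ℝ) ≤ PP n j := by
        have := desc_le_PP n j hj
        rw [Nat.descFactorial_eq_factorial_mul_choose] at this
        exact_mod_cast this
      rw [div_eq_mul_one_div (_ ^ _), mul_comm]
      refine mul_le_mul_of_nonneg_left ?_ (by positivity)
      rw [div_le_div_iff₀ hP (by positivity)]
      linarith
  have := tannery (fun n j => (EE n j : ℝ) / PP n j * (b / R) ^ j)
      (fun j => 1 / (8 ^ j * j.factorial) * (b / R) ^ j) (fun j => (b / R) ^ j / j.factorial) _ L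
      (fun j => (EP_lim j).mul_const _) ?_ (fun j => by positivity)
      (Real.summable_pow_div_factorial _) hD
  · have e : (∑' j : ℕ, 1 / (8 ^ j * (j.factorial : ℝ)) * (b / R) ^ j) = Real.exp (b / R / 8) := by
      rw [Real.exp_eq_exp_ℝ, NormedSpace.exp_eq_tsum_div]
      refine tsum_congr fun j => ?_
      rw [div_pow _ (8 : ℝ)]
      field_simp
    rw [e] at this
    refine this.congr fun n => ?_
    rw [xif_eq, Finset.sum_mul, Finset.sum_div]
    refine Finset.sum_congr rfl fun j hj => ?_
    have hj : j ≤ n := by simpa [Nat.lt_succ_iff] using hj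
    have hP : (0 : ℝ) < PP n j := by exact_mod_cast PP_pos n j hj
    have hbn : (b : ℝ) ^ n = b ^ (n - j) * b ^ j := by rw [← pow_add]; congr 1; omega
    rw [hK n j hj, hbn, div_pow]
    field_simp
  · intro n j hj
    have hP : (0 : ℝ) < PP n j := by exact_mod_cast PP_pos n j hj
    rw [abs_of_nonneg (by positivity)]
    have h1 : (j.factorial * EE n j : ℝ) ≤ PP n j := by exact_mod_cast EE_le_PP n j
    rw [div_eq_mul_one_div (_ ^ _), mul_comm]
    refine mul_le_mul_of_nonneg_left ?_ (by positivity)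
    rw [div_le_div_iff₀ hP (by positivity)]
    linarith

lemma chi_sum (m ℓ : ℕ) (hm : 1 ≤ m) (hℓ : ℓ ≤ m - 1) :
    ∑ k ∈ Finset.Icc 1 (8 * m + 4), chiX m ℓ k *
      Real.cos (2 * Real.pi * (k / ((8 * m + 4 : ℕ) : ℝ))) =
      -2 * Real.sin (Real.pi * (ℓ + 1) / (2 * m + 1)) := by
  obtain ⟨d, rfl⟩ : ∃ d, m = ℓ + 1 + d := ⟨m - 1 - ℓ, by omega⟩
  have h1 : ∀ k ∈ Finset.Icc 1 (8 * (ℓ + 1 + d) + 4), chiX (ℓ + 1 + d) ℓ k =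
      (if k = 2 * d + 1 then -(1 / 2) else 0) + (if k = 8 * ℓ + 6 * d + 11 then -(1 / 2) else 0) +
      (if k = 4 * ℓ + 2 * d + 5 then (1 / 2) else 0) +
      (if k = 4 * ℓ + 6 * d + 7 then (1 / 2) else 0) := by
    intro k hk
    have hk := Finset.mem_Icc.mp hk
    have hmod : ∀ r : ℕ, 0 < r → r < 8 * (ℓ + 1 + d) + 4 → ∀ z : ℤ, z = r →
        (((k : ℤ) % (8 * ((ℓ + 1 + d : ℕ) : ℤ) + 4) = z % (8 * ((ℓ + 1 + d : ℕ) : ℤ) + 4)) ↔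
          k = r) := by
      rintro r h0 hr z rfl
      have e : (8 * ((ℓ + 1 + d : ℕ) : ℤ) + 4) = ((8 * (ℓ + 1 + d) + 4 : ℕ) : ℤ) := by push_cast; ring
      rw [e, ← Int.natCast_mod, ← Int.natCast_mod, Int.natCast_inj, Nat.mod_eq_of_lt hr]
      rcases hk.2.lt_or_eq with h | h
      · rw [Nat.mod_eq_of_lt h]
      · rw [h, Nat.mod_self]
        omega
    unfold chiX
    simp only [hmod (2 * d + 1) (by omega) (by omega)
        (2 * ((ℓ + 1 + d : ℕ) : ℤ) - 2 * (ℓ : ℤ) - 1) (by push_cast; ring),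
      hmod (8 * ℓ + 6 * d + 11) (by omega) (by omega)
        (6 * ((ℓ + 1 + d : ℕ) : ℤ) + 2 * (ℓ : ℤ) + 5) (by push_cast; ring),
      hmod (4 * ℓ + 2 * d + 5) (by omega) (by omega)
        (2 * ((ℓ + 1 + d : ℕ) : ℤ) + 2 * (ℓ : ℤ) + 3) (by push_cast; ring),
      hmod (4 * ℓ + 6 * d + 7) (by omega) (by omega)
        (6 * ((ℓ + 1 + d : ℕ) : ℤ) - 2 * (ℓ : ℤ) + 1) (by push_cast; ring)]
    split_ifs <;> first | omega | norm_num
  rw [Finset.sum_congr rfl (fun k hk => by rw [h1 k hk])]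
  simp only [add_mul, Finset.sum_add_distrib, ite_mul, zero_mul, Finset.sum_ite_eq',
    Finset.mem_Icc]
  rw [if_pos (by omega), if_pos (by omega), if_pos (by omega), if_pos (by omega)]
  set t := Real.pi * ((ℓ : ℝ) + 1) / (2 * ((ℓ + 1 + d : ℕ) : ℝ) + 1) with ht
  have hN : (2 * ((ℓ : ℝ) + 1 + d) + 1) ≠ 0 := by positivity
  have hN2 : (8 * ((ℓ : ℝ) + 1 + d) + 4) ≠ 0 := by positivity
  rw [show 2 * Real.pi * (((2 * d + 1 : ℕ) : ℝ) / ((8 * (ℓ + 1 + d) + 4 : ℕ) : ℝ)) =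
      Real.pi / 2 - t by rw [ht]; push_cast; field_simp; ring,
    show 2 * Real.pi * (((8 * ℓ + 6 * d + 11 : ℕ) : ℝ) / ((8 * (ℓ + 1 + d) + 4 : ℕ) : ℝ)) =
      2 * Real.pi - (Real.pi / 2 - t) by rw [ht]; push_cast; field_simp; ring,
    show 2 * Real.pi * (((4 * ℓ + 2 * d + 5 : ℕ) : ℝ) / ((8 * (ℓ + 1 + d) + 4 : ℕ) : ℝ)) =
      t + Real.pi / 2 by rw [ht]; push_cast; field_simp; ring,
    show 2 * Real.pi * (((4 * ℓ + 6 * d + 7 : ℕ) : ℝ) / ((8 * (ℓ + 1 + d) + 4 : ℕ) : ℝ)) =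
      2 * Real.pi - (t + Real.pi / 2) by rw [ht]; push_cast; field_simp; ring,
    Real.cos_two_pi_sub, Real.cos_two_pi_sub, Real.cos_pi_div_two_sub, Real.cos_add_pi_div_two]
  ring


/-- The coefficients `ξ_{ℓ,m}(n)` of `X_m^{(ℓ)}(1−q)` (obtained from the
construction with `f = χ_m^{(ℓ)}`, `M = 8m+4`, `ν = 1`, `a = (2m−2ℓ−1)²`, `b = 8(2m+1)`)
satisfy `ξ_{ℓ,m}(n) ~ sin(π(ℓ+1)/(2m+1)) ((2m+1)/π²)^(n+1) 2^(n+3) n! √n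
e^(π²/(8m+4)) / √π` as `n → ∞`. -/
theorem torus_knot_T2_asymptotic (m ℓ : ℕ) (hm : 1 ≤ m) (hℓ : ℓ ≤ m - 1) :
    Filter.Tendsto
      (fun n : ℕ =>
        xif (8 * m + 4) (chiX m ℓ) 1 ((2 * m - 2 * ℓ - 1) ^ 2) (8 * (2 * m + 1)) n /
          (Real.sin (Real.pi * (ℓ + 1) / (2 * m + 1)) *
            ((2 * m + 1 : ℝ) / Real.pi ^ 2) ^ (n + 1) * 2 ^ (n + 3) *
            (n.factorial : ℝ) * Real.sqrt n *
            Real.exp (Real.pi ^ 2 / (8 * m + 4)) / Real.sqrt Real.pi))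
      Filter.atTop (nhds 1) := by
  have hpi := Real.pi_pos
  have h1 := Cf_lim (8 * m + 4) (by omega) (chiX m ℓ)
  rw [chi_sum m ℓ hm hℓ] at h1
  have h2 := main_lim (8 * m + 4) (by omega) (chiX m ℓ) ((2 * m - 2 * ℓ - 1) ^ 2)
    (8 * (2 * m + 1)) (by omega) _ h1
  have hS : 0 < Real.sin (Real.pi * (ℓ + 1) / (2 * m + 1)) := by
    have : (ℓ : ℝ) + 1 ≤ m := by
      have : ℓ + 1 ≤ m := by omega
      exact_mod_cast this
    apply Real.sin_pos_of_pos_of_lt_pi (by positivity)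
    rw [div_lt_iff₀ (by positivity)]
    nlinarith
  have hexp : ((8 * (2 * m + 1) : ℕ) : ℝ) / ((((8 * m + 4 : ℕ) : ℝ) / (2 * Real.pi)) ^ 2) / 8 =
      Real.pi ^ 2 / (8 * m + 4) := by
    push_cast
    rw [show (8 * (m : ℝ) + 4) = 4 * (2 * m + 1) by ring]
    field_simp
    ring
  rw [hexp] at h2
  generalize Real.sin (Real.pi * (ℓ + 1) / (2 * m + 1)) = S at *
  have hE := Real.exp_pos (Real.pi ^ 2 / (8 * m + 4))
  generalize Real.exp (Real.pi ^ 2 / (8 * m + 4)) = E at *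
  have hq : 0 < √Real.pi := Real.sqrt_pos.mpr hpi
  have h3 := (h2.mul fact_lim).mul_const (√Real.pi * Real.pi ^ 2 / (8 * S * (2 * m + 1) * E))
  have hN : (0 : ℝ) < 2 * m + 1 := by positivity
  convert h3.congr' ?_ using 2
  · push_cast
    rw [show (8 * (m : ℝ) + 4) = 4 * (2 * m + 1) by ring]
    field_simp
    norm_num
  · filter_upwards [eventually_gt_atTop 0] with n hn0
    have hn : (0 : ℝ) < n := by positivity
    have hs : 0 < √(n : ℝ) := Real.sqrt_pos.mpr hn
    generalize xif (8 * m + 4) (chiX m ℓ) 1 ((2 * m - 2 * ℓ - 1) ^ 2) (8 * (2 * m + 1)) n = x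
    push_cast
    rw [show (8 * (m : ℝ) + 4) = 4 * (2 * m + 1) by ring]
    generalize (2 * (m : ℝ) + 1) = N at *
    have e1 : ((4 * N / (2 * Real.pi)) ^ 2) ^ n = (4 : ℝ) ^ n * (N ^ n) ^ 2 / (Real.pi ^ n) ^ 2 := by
      rw [show (4 * N / (2 * Real.pi)) ^ 2 = 4 * N ^ 2 / Real.pi ^ 2 by field_simp; ring]
      rw [div_pow, mul_pow, ← pow_mul, ← pow_mul, ← pow_mul, ← pow_mul, mul_comm 2 n]
    have e2 : (8 * N) ^ n = (2 ^ n * 4 ^ n) * N ^ n := by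
      rw [mul_pow, ← mul_pow 2 4]; norm_num
    have e4 : (4 : ℝ) ^ n = 2 ^ n * 2 ^ n := by rw [← mul_pow]; norm_num
    have e3 : (N / Real.pi ^ 2) ^ (n + 1) = N ^ n * N / ((Real.pi ^ n) ^ 2 * Real.pi ^ 2) := by
      rw [div_pow, pow_succ, pow_succ (Real.pi ^ 2), ← pow_mul, ← pow_mul, mul_comm 2 n]
    rw [e1, e2, e3, e4, pow_add]
    field_simp
    try norm_num
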